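/- Let $F_k$ be the free associative algebra over a field of characteristic zero with generators $y_1,\dots,y_k$, and $\mathfrak{f}_k \subset F_k$ the free Lie algebra on the same generators, so that $F_k = U(\mathfrak{f}_k)$. Let $p_k : F_k \to \mathfrak{f}_k$ be the composition of the inverse of the symmetrization isomorphism $S(\mathfrak{f}_k) \to F_k$ with the projection onto $S^1(\mathfrak{f}_k) = \mathfrak{f}_k$. Then $p_k(y_1 \cdots y_k) = \mathrm{CBH}_k(y_1,\dots,y_k)$, the multilinear part in $y_1,\dots,y_k$ of $\log(e^{y_1}\cdots e^{y_k})$. -/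

import Mathlib

/-!
Common setup: a concrete model of the degree completion `F̂ₙ` of the free
associative algebra on `n` generators `x₁, …, xₙ` over a field `K` of
characteristic zero, as the space of formal (possibly infinite) `K`-linear
combinations of words in the letters `x₁, …, xₙ`, i.e. functions
`List (Fin n) → K` (the value at a word is its coefficient).  The product is
the (well-defined) convolution/concatenation product.  The free associative
algebra `Fₙ` sits inside as the finitely supported functions; the word `w`
corresponds to `delta w`, and `xᵢ = delta [i]`.
-/

noncomputable section

open Finset

namespace CBHPaper

/-- The degree completion `F̂ₙ` of the free associative algebra on `n`
generators over `K`: formal series of words, i.e. functions assigning to every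
word (a list over `Fin n`) its coefficient.  Addition and scalar
multiplication are pointwise (the `Pi` module structure). -/
abbrev Fhat (K : Type) (n : ℕ) : Type := List (Fin n) → K

variable {K : Type} [Field K] [CharZero K] {n : ℕ}

/-- The unit `1` of `F̂ₙ` (the empty word). -/
def oneF : Fhat K n := fun w => if w = [] then 1 else 0

/-- The word `w₀` (a product of generators), viewed as an element of `F̂ₙ`.
In particular `delta [i]` is the generator `xᵢ`. -/
def delta (w₀ : List (Fin n)) : Fhat K n := fun w => if w = w₀ then 1 else 0

/-- The (concatenation) product of `F̂ₙ`: the coefficient of a word `w` in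
`f * g` is the sum over all ways of splitting `w` as a concatenation `u ++ v`
of `f u * g v`. -/
def mulF (f g : Fhat K n) : Fhat K n :=
  fun w => ∑ i ∈ Finset.range (w.length + 1), f (w.take i) * g (w.drop i)

/-- Powers in `F̂ₙ`. -/
def powF (f : Fhat K n) : ℕ → Fhat K n
  | 0 => oneF
  | k + 1 => mulF f (powF f k)

/-- Ordered product of a finite list of elements of `F̂ₙ`. -/
def prodListF : List (Fhat K n) → Fhat K n
  | [] => oneF
  | f :: l => mulF f (prodListF l)

/-- The exponential series `exp f = ∑ₖ fᵏ/k!`; it is the genuine exponential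
when `f` has vanishing constant term (then the sum defining each coefficient
is finite, as accounted for by the truncation below). -/
def expF (f : Fhat K n) : Fhat K n :=
  fun w => ∑ k ∈ Finset.range (w.length + 1), (Nat.factorial k : K)⁻¹ * powF f k w

/-- The logarithm series `log X = ∑_{k ≥ 1} (-1)^{k+1} (X-1)ᵏ / k`; it is the
genuine logarithm (the inverse of `expF`) when `X` has constant term `1`. -/
def logF (X : Fhat K n) : Fhat K n :=
  fun w => ∑ k ∈ Finset.Icc 1 w.length,
    (-1 : K) ^ (k + 1) * (k : K)⁻¹ * powF (X - oneF) k w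

/-- `shuf w u v` is the number of ways of splitting the word `w` into a
subword equal to `u` and a complementary subword equal to `v`; these are the
structure constants of the coproduct `Δ` of `F̂ₙ` for which the generators are
primitive:  `Δ(w) = ∑_{S ⊆ positions of w} w|_S ⊗ w|_{Sᶜ}`. -/
def shuf : List (Fin n) → List (Fin n) → List (Fin n) → ℕ
  | [], u, v => if u = [] ∧ v = [] then 1 else 0
  | a :: w, u, v =>
      (match u with
        | b :: u' => if b = a then shuf w u' v else 0
        | [] => 0) +
      (match v with
        | b :: v' => if b = a then shuf w u v' else 0
        | [] => 0)

/-- The completed coproduct of `F̂ₙ` (for which the generators `xᵢ` are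
primitive), expressed coefficientwise: `coprodF X u v` is the coefficient of
`u ⊗ v` in `Δ(X)`.  Only words of length `|u| + |v|` contribute. -/
def coprodF (X : Fhat K n) (u v : List (Fin n)) : K :=
  ∑ c : Fin (u.length + v.length) → Fin n,
    (shuf (List.ofFn c) u v : K) * X (List.ofFn c)

/-- `X ∈ F̂ₙ` is group-like if `X = 1 + (higher degree)` and `Δ(X) = X ⊗ X`. -/
def IsGroupLike (X : Fhat K n) : Prop :=
  X [] = 1 ∧ ∀ u v, coprodF X u v = X u * X v

/-- The free Lie algebra `fₙ ⊆ Fₙ ⊆ F̂ₙ`: the smallest subspace containing the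
generators `xᵢ` and closed under the commutator bracket `[f,g] = fg - gf`. -/
inductive IsLieElem : Fhat K n → Prop
  | gen (i : Fin n) : IsLieElem (delta [i])
  | zero : IsLieElem 0
  | add {f g : Fhat K n} : IsLieElem f → IsLieElem g → IsLieElem (f + g)
  | smul (c : K) {f : Fhat K n} : IsLieElem f → IsLieElem (c • f)
  | lieBracket {f g : Fhat K n} : IsLieElem f → IsLieElem g →
      IsLieElem (mulF f g - mulF g f)

/-- The homogeneous component of degree `k` of an element of `F̂ₙ`. -/
def trunc (k : ℕ) (f : Fhat K n) : Fhat K n := fun w => if w.length = k then f w else 0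

/-- The completed free Lie algebra `f̂ₙ ⊆ F̂ₙ` (degree completion of `fₙ`):
every homogeneous component is a Lie element. -/
def IsLieElemHat (f : Fhat K n) : Prop := ∀ k, IsLieElem (trunc k f)

/-- `CBHₖ(x₁, …, xₖ)`: the multilinear part (the component of multidegree
`(1,…,1)`, i.e. the part supported on words of length `k` with pairwise
distinct letters) of `log (e^{x₁} ⋯ e^{xₖ})`, an element of `fₖ ⊆ F̂ₖ`. -/
def CBHuniv (K : Type) [Field K] [CharZero K] (k : ℕ) : Fhat K k :=
  fun w =>
    if w.length = k ∧ w.Nodup then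
      logF (prodListF (List.ofFn fun i : Fin k => expF (delta [i]))) w
    else 0

/-- The pushforward (substitution `yⱼ ↦ x_{φ(j)}`) along a map of generators
`φ : Fin k → Fin n`; it is the continuous algebra morphism `F̂ₖ → F̂ₙ` induced
by `φ`. -/
def pushF {k : ℕ} (φ : Fin k → Fin n) (f : Fhat K k) : Fhat K n :=
  fun v => ∑ u : Fin v.length → Fin k,
    if (List.ofFn u).map φ = v then f (List.ofFn u) else 0

/-- `CBH_k(x_{i₁}, …, x_{i_k})` for a word `w = (i₁, …, i_k)` over `Fin n`:
the image of the universal `CBHuniv k` under the substitution `yⱼ ↦ x_{iⱼ}`.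
This is `cbhₙ(x_{i₁} ⋯ x_{i_k})`. -/
def CBHword (w : List (Fin n)) : Fhat K n :=
  pushF w.get (CBHuniv K w.length)

/-- The completion `ĉbhₙ : F̂ₙ → f̂ₙ ⊆ F̂ₙ` of the linear map `cbhₙ` sending
the word `x_{i₁} ⋯ x_{i_k}` to `CBHₖ(x_{i₁}, …, x_{i_k})`:  writing
`X = ∑_w X(w)·w`, `ĉbhₙ(X) = ∑_w X(w)·CBHword w` (for each coefficient this
is a finite sum, since `CBHword w` is homogeneous of degree `|w|`). -/
def cbhHat (X : Fhat K n) : Fhat K n :=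
  fun v => ∑ c : Fin v.length → Fin n, X (List.ofFn c) * CBHword (List.ofFn c) v

/-- The symmetrized product `sym(z₁ ⊙ ⋯ ⊙ z_k) = (1/k!) ∑_σ z_{σ(1)} ⋯ z_{σ(k)}`.
As the `zᵢ` range over (completed) Lie elements, these elements span the image
of `Sᵏ` under the symmetrization map. -/
def symProd {k : ℕ} (z : Fin k → Fhat K n) : Fhat K n :=
  (Nat.factorial k : K)⁻¹ • ∑ σ : Equiv.Perm (Fin k), prodListF (List.ofFn (z ∘ σ))

end CBHPaper

namespace CBHPaper

/-!
By polarization, a product of Lie elements is, up to products of fewer Lie elements, a combination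
of powers `z ^ m` of Lie elements, so these powers span the free algebra. The projection `p` sends
`z ^ m` to `z` if `m = 1` and to `0` otherwise. On the other hand, a Lie element `z` is primitive,
so the `n`-th convolution power of the identity multiplies `z ^ m` by `n ^ m`; the convolution
logarithm of the identity therefore multiplies it by the derivative of `x ^ m` at `0` and agrees
with `p`. On a product of distinct generators in increasing order, convolution of endomorphisms is
multiplication of the multilinear parts of series, and the identity corresponds to
`e^{y₁} ⋯ e^{yₖ}`; hence its convolution logarithm yields the multilinear part of
`log (e^{y₁} ⋯ e^{yₖ})`.
-/

section NumericalDifferentiation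

open Polynomial

theorem coeff_one_descPochhammer_succ (R : Type*) [CommRing R] (j : ℕ) :
    (descPochhammer R (j + 1)).coeff 1 = (-1) ^ j * (j.factorial : R) := by
  have h : (ascPochhammer R j).eval 1 = (-1) ^ j * (descPochhammer R j).eval (-1) := by
    rw [← ascPochhammer_eval_neg_eq_descPochhammer, neg_neg]
  rw [descPochhammer_succ_left, coeff_X_mul, coeff_zero_eq_eval_zero, eval_comp, eval_sub, eval_X,
    eval_one, zero_sub, ← ascPochhammer_eval_one, h, ← mul_assoc, ← mul_pow, neg_one_mul, neg_neg,
    one_pow, one_mul]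

variable {K : Type*} [Field K] [CharZero K] {P : K[X]} {N : ℕ}

theorem eq_sum_fwdDiff_iter_mul_descPochhammer (hP : P.natDegree ≤ N) :
    P = ∑ j ∈ range (N + 1), C ((fwdDiff 1)^[j] P.eval 0 / j.factorial) * descPochhammer K j := by
  refine eq_of_infinite_eval_eq _ _
    ((Set.infinite_range_of_injective (Nat.cast_injective (R := K))).mono ?_)
  rintro _ ⟨m, rfl⟩
  have newton : P.eval (m : K) =
      ∑ j ∈ range (m + 1), m.choose j • (fwdDiff 1)^[j] P.eval 0 := by
    simpa only [nsmul_one, zero_add] using shift_eq_sum_fwdDiff_iter (1 : K) P.eval m 0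
  calc P.eval (m : K)
      = ∑ j ∈ range (max m N + 1), m.choose j • (fwdDiff 1)^[j] P.eval 0 := by
        rw [newton]
        refine sum_subset (range_mono (by omega)) fun j _ hj => ?_
        rw [Nat.choose_eq_zero_of_lt (by simpa using hj), zero_smul]
    _ = ∑ j ∈ range (N + 1), m.choose j • (fwdDiff 1)^[j] P.eval 0 := by
        refine (sum_subset (range_mono (by omega)) fun j _ hj => ?_).symm
        have hdeg : P.natDegree < j := by
          rw [mem_range] at hj
          omega
        rw [fwdDiff_iter_eq_zero_of_degree_lt hdeg, Pi.zero_apply, smul_zero]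
    _ = _ := by
        rw [eval_finsetSum]
        refine sum_congr rfl fun j _ => ?_
        rw [nsmul_eq_mul, Nat.cast_choose_eq_descPochhammer_div, eval_mul, eval_C]
        ring

theorem coeff_one_eq_sum_fwdDiff_iter (hP : P.natDegree ≤ N) :
    P.coeff 1 = ∑ j ∈ Icc 1 N, (-1) ^ (j + 1) * (j : K)⁻¹ * (fwdDiff 1)^[j] P.eval 0 := by
  conv_lhs => rw [eq_sum_fwdDiff_iter_mul_descPochhammer hP]
  rw [finsetSum_coeff, sum_range_succ', ← Finset.Ico_add_one_right_eq_Icc, sum_Ico_eq_sum_range]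
  simp only [descPochhammer_zero, mul_one, coeff_C_succ, add_zero, add_tsub_cancel_right]
  refine sum_congr rfl fun j _ => ?_
  have hj : (j.factorial : K) ≠ 0 := mod_cast j.factorial_ne_zero
  have hj' : (j : K) + 1 ≠ 0 := Nat.cast_add_one_ne_zero j
  rw [coeff_C_mul, coeff_one_descPochhammer_succ, Nat.factorial_succ, add_comm 1 j]
  push_cast
  field_simp
  ring

end NumericalDifferentiation

section Polarization

theorem sum_neg_one_pow_card_compl_of_forall_mem {ι : Type*} [Fintype ι] [DecidableEq ι]
    (r : ι → ι) :
    ∑ s : Finset ι, (if ∀ i, r i ∈ s then (-1 : ℤ) ^ #sᶜ else 0) =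
      if Function.Bijective r then 1 else 0 := by
  have mem_iff (s : Finset ι) : (∀ i, r i ∈ s) ↔ sᶜ ∈ ((univ.image r)ᶜ).powerset := by
    rw [mem_powerset, compl_subset_compl, image_subset_iff]
    simp only [mem_univ, forall_const]
  have surj_iff : (univ.image r)ᶜ = ∅ ↔ Function.Bijective r := by
    rw [compl_eq_empty_iff, ← coe_eq_univ, coe_image, coe_univ, Set.image_univ, Set.range_eq_univ,
      Finite.surjective_iff_bijective]
  calc
    _ = ∑ s : Finset ι, (if s ∈ ((univ.image r)ᶜ).powerset then (-1 : ℤ) ^ #s else 0) := by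
      simp only [mem_iff]
      exact Equiv.sum_comp (Function.Involutive.toPerm _ (compl_involutive (α := Finset ι)))
        fun s => if s ∈ ((univ.image r)ᶜ).powerset then (-1 : ℤ) ^ #s else 0
    _ = ∑ s ∈ ((univ.image r)ᶜ).powerset, (-1 : ℤ) ^ #s := by rw [sum_ite_mem, univ_inter]
    _ = _ := by rw [sum_powerset_neg_one_pow_card]; exact if_congr surj_iff rfl rfl

theorem sum_perm_comp_eq_sum_finset {R ι M N : Type*} [Semiring R] [Fintype ι] [DecidableEq ι]
    [AddCommMonoid M] [Module R M] [AddCommGroup N] [Module R N]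
    (f : MultilinearMap R (fun _ : ι => M) N) (z : ι → M) :
    ∑ σ : Equiv.Perm ι, f (z ∘ σ) =
      ∑ s : Finset ι, (-1 : ℤ) ^ #sᶜ • f fun _ => ∑ i ∈ s, z i := by
  have expand (s : Finset ι) : (-1 : ℤ) ^ #sᶜ • f (fun _ => ∑ i ∈ s, z i) =
      ∑ r : ι → ι, (if ∀ i, r i ∈ s then (-1 : ℤ) ^ #sᶜ else 0) • f (z ∘ r) := by
    rw [f.map_sum_finset (fun _ => z) fun _ => s, smul_sum]
    simp only [ite_smul, zero_smul]
    rw [← sum_filter]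
    exact sum_congr (by ext r; simp [Fintype.mem_piFinset]) fun r _ => rfl
  calc ∑ σ : Equiv.Perm ι, f (z ∘ σ)
      = ∑ r : ι → ι with Function.Bijective r, f (z ∘ r) :=
        sum_bij (fun σ _ => σ) (fun σ _ => by simp)
          (fun _ _ _ _ h => Equiv.coe_fn_injective h)
          (fun r hr => ⟨Equiv.ofBijective r (mem_filter.1 hr).2, mem_univ _, rfl⟩)
          fun _ _ => rfl
    _ = ∑ r : ι → ι, (if Function.Bijective r then (1 : ℤ) else 0) • f (z ∘ r) := by
        simp only [ite_smul, zero_smul, one_smul, sum_filter]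
    _ = ∑ s : Finset ι, (-1 : ℤ) ^ #sᶜ • f fun _ => ∑ i ∈ s, z i := by
        simp only [expand]
        rw [sum_comm]
        simp only [← sum_smul, sum_neg_one_pow_card_compl_of_forall_mem]

theorem sum_perm_list_prod_eq {A : Type*} [Ring A] {m : ℕ} (z : Fin m → A) :
    ∑ σ : Equiv.Perm (Fin m), (List.ofFn (z ∘ σ)).prod =
      ∑ s : Finset (Fin m), (-1 : ℤ) ^ #sᶜ • (∑ i ∈ s, z i) ^ m := by
  simpa only [MultilinearMap.mkPiAlgebraFin_apply, List.ofFn_const, List.prod_replicate] using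
    sum_perm_comp_eq_sum_finset (MultilinearMap.mkPiAlgebraFin ℤ m A) z

end Polarization

section LiePowers

attribute [local instance] LieRing.ofAssociativeRing

section CommRing

variable {R A : Type*} [CommRing R] [Ring A] [Algebra R A] {L : LieSubalgebra R A}

/-- The span of the products of fewer than `m` elements of the Lie subalgebra `L`: the step of the
Poincaré–Birkhoff–Witt filtration below degree `m`. -/
def shortProducts (L : LieSubalgebra R A) (m : ℕ) : Submodule R A :=
  Submodule.span R {a | ∃ l : List A, (∀ x ∈ l, x ∈ L) ∧ l.length < m ∧ l.prod = a}

theorem mul_mem_shortProducts {x a : A} {m : ℕ} (hx : x ∈ L) (ha : a ∈ shortProducts L m) :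
    x * a ∈ shortProducts L (m + 1) := by
  induction ha using Submodule.span_induction with
  | mem a h =>
    obtain ⟨l, hl, hm, rfl⟩ := h
    exact Submodule.subset_span
      ⟨x :: l, List.forall_mem_cons.2 ⟨hx, hl⟩, Nat.succ_lt_succ hm, List.prod_cons⟩
  | zero => rw [mul_zero]; exact zero_mem _
  | add a b _ _ ha hb => rw [mul_add]; exact add_mem ha hb
  | smul c a _ ha => rw [mul_smul_comm]; exact Submodule.smul_mem _ _ ha

theorem prod_sub_prod_mem_shortProducts {l l' : List A} (h : l.Perm l') (hl : ∀ x ∈ l, x ∈ L) :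
    l.prod - l'.prod ∈ shortProducts L l.length := by
  induction h with
  | nil => rw [sub_self]; exact zero_mem _
  | cons x _ ih =>
    rw [List.forall_mem_cons] at hl
    rw [List.prod_cons, List.prod_cons, ← mul_sub]
    exact mul_mem_shortProducts hl.1 (ih hl.2)
  | swap x y l =>
    simp only [List.forall_mem_cons] at hl
    refine Submodule.subset_span
      ⟨⁅y, x⁆ :: l, List.forall_mem_cons.2 ⟨L.lie_mem hl.1 hl.2.1, hl.2.2⟩, by simp, ?_⟩
    simp only [List.prod_cons, LieRing.of_associative_ring_bracket, sub_mul, mul_assoc]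
  | trans h _ ih ih' =>
    rw [← sub_add_sub_cancel]
    refine add_mem (ih hl) ?_
    rw [h.length_eq]
    exact ih' fun x hx => hl x (h.symm.subset hx)

theorem factorial_smul_prod_sub_mem_shortProducts {m : ℕ} {z : Fin m → A} (hz : ∀ i, z i ∈ L) :
    (m.factorial : R) • (List.ofFn z).prod -
      ∑ s : Finset (Fin m), (-1 : ℤ) ^ #sᶜ • (∑ i ∈ s, z i) ^ m ∈ shortProducts L m := by
  have hcard : (m.factorial : R) • (List.ofFn z).prod =
      ∑ _σ : Equiv.Perm (Fin m), (List.ofFn z).prod := by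
    rw [sum_const, card_univ, Fintype.card_perm, Fintype.card_fin, Nat.cast_smul_eq_nsmul]
  rw [hcard, ← sum_perm_list_prod_eq, ← sum_sub_distrib]
  refine sum_mem fun σ _ => ?_
  simpa only [List.length_ofFn] using
    prod_sub_prod_mem_shortProducts (Equiv.Perm.ofFn_comp_perm σ z).symm
      (List.forall_mem_ofFn_iff.2 hz)

end CommRing

variable {K A : Type*} [Field K] [CharZero K] [Ring A] [Algebra K A] {L : LieSubalgebra K A}

theorem list_prod_mem_span_pow {l : List A} (hl : ∀ x ∈ l, x ∈ L) :
    l.prod ∈ Submodule.span K {a | ∃ z ∈ L, ∃ j : ℕ, z ^ j = a} := by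
  induction hm : l.length using Nat.strong_induction_on generalizing l with
  | _ m ih =>
    subst hm
    have short_le : shortProducts L l.length ≤
        Submodule.span K {a | ∃ z ∈ L, ∃ j : ℕ, z ^ j = a} := by
      refine Submodule.span_le.2 ?_
      rintro _ ⟨l', hl', hlt, rfl⟩
      exact ih _ hlt hl' rfl
    have hget (i : Fin l.length) : l.get i ∈ L := hl _ (l.get_mem i)
    have powers : ∑ s : Finset (Fin l.length), (-1 : ℤ) ^ #sᶜ • (∑ i ∈ s, l.get i) ^ l.length ∈
        Submodule.span K {a | ∃ z ∈ L, ∃ j : ℕ, z ^ j = a} := by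
      refine sum_mem fun s _ => zsmul_mem (Submodule.subset_span ?_) _
      exact ⟨∑ i ∈ s, l.get i, sum_mem fun i _ => hget i, l.length, rfl⟩
    have symm := short_le (factorial_smul_prod_sub_mem_shortProducts (R := K) hget)
    rw [Submodule.sub_mem_iff_left _ powers, List.ofFn_get,
      Submodule.smul_mem_iff _ (mod_cast l.length.factorial_ne_zero)] at symm
    exact symm

theorem span_pow_eq_top (hL : Algebra.adjoin K (L : Set A) = ⊤) :
    Submodule.span K {a | ∃ z ∈ L, ∃ j : ℕ, z ^ j = a} = ⊤ := by
  rw [eq_top_iff, ← Algebra.top_toSubmodule, ← hL, Algebra.adjoin_eq_span, Submodule.span_le]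
  intro a ha
  obtain ⟨l, hl, rfl⟩ := Submonoid.exists_list_of_mem_closure ha
  exact list_prod_mem_span_pow hl

end LiePowers

section ConvolutionPowers

open Coalgebra WithConv
open scoped TensorProduct

attribute [local instance] LieRing.ofAssociativeRing

section CommRing

variable {R B : Type*} [CommRing R] [Ring B] [Bialgebra R B]

variable (R B) in
/-- The Lie algebra of primitive elements of a bialgebra. -/
def primitives : LieSubalgebra R B where
  carrier := {z | comul (R := R) z = z ⊗ₜ 1 + 1 ⊗ₜ z}
  zero_mem' := by simp
  add_mem' {x y} hx hy := by
    simp only [Set.mem_ofPred_eq] at hx hy ⊢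
    rw [map_add, hx, hy, TensorProduct.add_tmul, TensorProduct.tmul_add]
    abel
  smul_mem' c x hx := by
    simp only [Set.mem_ofPred_eq] at hx ⊢
    rw [map_smul, hx, smul_add, TensorProduct.smul_tmul', TensorProduct.tmul_smul]
  lie_mem' {x y} hx hy := by
    simp only [Set.mem_ofPred_eq] at hx hy ⊢
    simp only [LieRing.of_associative_ring_bracket, map_sub, Bialgebra.comul_mul, hx, hy, add_mul,
      mul_add, Algebra.TensorProduct.tmul_mul_tmul, one_mul, mul_one, TensorProduct.sub_tmul,
      TensorProduct.tmul_sub]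
    abel

theorem mem_primitives {z : B} : z ∈ primitives R B ↔ comul (R := R) z = z ⊗ₜ 1 + 1 ⊗ₜ z := Iff.rfl

theorem counit_eq_zero_of_mem_primitives {z : B} (hz : z ∈ primitives R B) :
    counit (R := R) z = 0 := by
  have h := congrArg (counit (R := R)) (congrArg (TensorProduct.lid R B)
    (Coalgebra.rTensor_counit_comul (R := R) z))
  rw [mem_primitives.1 hz] at h
  simpa using h

theorem comul_pow_of_mem_primitives {z : B} (hz : z ∈ primitives R B) (m : ℕ) :
    comul (R := R) (z ^ m) =
      ∑ i ∈ range (m + 1), m.choose i • (z ^ i) ⊗ₜ[R] (z ^ (m - i)) := by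
  have hcomm : Commute (z ⊗ₜ[R] (1 : B)) (1 ⊗ₜ z) := by simp [commute_iff_eq]
  rw [Bialgebra.comul_pow, mem_primitives.1 hz, hcomm.add_pow]
  refine sum_congr rfl fun i _ => ?_
  rw [Algebra.TensorProduct.tmul_pow, Algebra.TensorProduct.tmul_pow,
    Algebra.TensorProduct.tmul_mul_tmul, one_pow, one_pow, mul_one, one_mul, ← Nat.cast_comm,
    nsmul_eq_mul]

theorem convPow_id_apply_pow {z : B} (hz : z ∈ primitives R B) (n m : ℕ) :
    (toConv (LinearMap.id : B →ₗ[R] B) ^ n).ofConv (z ^ m) = (n : R) ^ m • z ^ m := by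
  induction n generalizing m with
  | zero =>
    rw [pow_zero, LinearMap.convOne_apply, Bialgebra.counit_pow,
      counit_eq_zero_of_mem_primitives hz, Nat.cast_zero, Algebra.algebraMap_eq_smul_one]
    cases m with
    | zero => simp
    | succ m => simp
  | succ n ih =>
    rw [pow_succ', LinearMap.convMul_apply, comul_pow_of_mem_primitives hz]
    simp only [map_sum, map_nsmul, TensorProduct.map_tmul, LinearMap.mul'_apply, ih,
      LinearMap.id_apply]
    rw [Nat.cast_add_one, add_comm (n : R), add_pow, sum_smul]
    refine sum_congr rfl fun i hi => ?_
    rw [mul_smul_comm, ← pow_add, Nat.add_sub_cancel' (Nat.lt_succ_iff.1 (mem_range.1 hi)),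
      one_pow, one_mul, ← Nat.cast_smul_eq_nsmul R, smul_smul, mul_comm]

theorem convPow_id_mul_id_sub_one_apply_pow {z : B} (hz : z ∈ primitives R B) (n j m : ℕ) :
    (toConv (LinearMap.id : B →ₗ[R] B) ^ n * (toConv LinearMap.id - 1) ^ j).ofConv (z ^ m) =
      (fwdDiff 1)^[j] (fun x : R => x ^ m) n • z ^ m := by
  induction j generalizing n with
  | zero => rw [pow_zero, mul_one, convPow_id_apply_pow hz, Function.iterate_zero_apply]
  | succ j ih =>
    have split : toConv (LinearMap.id : B →ₗ[R] B) ^ n * (toConv LinearMap.id - 1) ^ (j + 1) =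
        toConv LinearMap.id ^ (n + 1) * (toConv LinearMap.id - 1) ^ j -
          toConv LinearMap.id ^ n * (toConv LinearMap.id - 1) ^ j := by
      rw [pow_succ' _ j, pow_succ, ← mul_assoc, mul_sub, mul_one, sub_mul]
    rw [split, ofConv_sub, LinearMap.sub_apply, ih, ih, ← sub_smul, Function.iterate_succ_apply',
      fwdDiff, Nat.cast_add_one]

end CommRing

variable {K B : Type*} [Field K] [Ring B] [Bialgebra K B]

variable (K B) in
/-- The convolution logarithm `log (1 + (id - 1)) = ∑ⱼ (-1)ʲ⁺¹ (id - 1)ʲ / j` of the identity of a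
bialgebra, truncated at `j ≤ N`: the (first) Eulerian idempotent on elements of degree at most
`N`. -/
def eulerian (N : ℕ) : B →ₗ[K] B :=
  (∑ j ∈ Icc 1 N,
    ((-1 : K) ^ (j + 1) * (j : K)⁻¹) • (toConv (LinearMap.id : B →ₗ[K] B) - 1) ^ j).ofConv

theorem eulerian_apply (N : ℕ) (a : B) :
    eulerian K B N a = ∑ j ∈ Icc 1 N, ((-1 : K) ^ (j + 1) * (j : K)⁻¹) •
      ((toConv (LinearMap.id : B →ₗ[K] B) - 1) ^ j).ofConv a := by
  simp only [eulerian, ofConv_sum, ofConv_smul, LinearMap.sum_apply, LinearMap.smul_apply]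

theorem eulerian_pow {z : B} (hz : z ∈ primitives K B) (N m : ℕ) :
    eulerian K B N (z ^ m) = (∑ j ∈ Icc 1 N,
      (-1 : K) ^ (j + 1) * (j : K)⁻¹ * (fwdDiff 1)^[j] (fun x : K => x ^ m) 0) • z ^ m := by
  rw [eulerian_apply, sum_smul]
  refine sum_congr rfl fun j _ => ?_
  have h := convPow_id_mul_id_sub_one_apply_pow hz 0 j m
  rw [pow_zero, one_mul, Nat.cast_zero] at h
  rw [h, smul_smul]

theorem eulerian_pow_of_le [CharZero K] {z : B} (hz : z ∈ primitives K B) {N m : ℕ} (hm : m ≤ N) :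
    eulerian K B N (z ^ m) = if m = 1 then z else 0 := by
  have h := coeff_one_eq_sum_fwdDiff_iter (K := K) ((Polynomial.natDegree_X_pow_le m).trans hm)
  simp only [Polynomial.eval_pow, Polynomial.eval_X] at h
  rw [eulerian_pow hz, ← h, Polynomial.coeff_X_pow]
  rcases eq_or_ne m 1 with rfl | hm1
  · rw [if_pos rfl, if_pos rfl, one_smul, pow_one]
  · rw [if_neg hm1, if_neg hm1.symm, zero_smul]

end ConvolutionPowers

section OrderedProducts

open Coalgebra WithConv
open scoped TensorProduct

variable {ι : Type*} [LinearOrder ι]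

section Monoid

variable {B : Type*} [Monoid B]

/-- The product of the elements `x i`, `i ∈ I`, in increasing order of the indices. -/
def orderedProd (x : ι → B) (I : Finset ι) : B := (I.sort.map x).prod

theorem orderedProd_empty (x : ι → B) : orderedProd x ∅ = 1 := by
  rw [orderedProd, sort_empty, List.map_nil, List.prod_nil]

theorem orderedProd_insert (x : ι → B) {a : ι} {I : Finset ι} (ha : ∀ i ∈ I, a < i) :
    orderedProd x (insert a I) = x a * orderedProd x I := by
  rw [orderedProd, sort_insert _ (fun i hi => (ha i hi).le) fun h => lt_irrefl _ (ha a h),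
    List.map_cons, List.prod_cons, orderedProd]

end Monoid

variable {R B : Type*} [CommRing R] [Ring B] [Bialgebra R B]

theorem counit_orderedProd {x : ι → B} (hx : ∀ i, x i ∈ primitives R B) (I : Finset ι) :
    counit (R := R) (orderedProd x I) = if I = ∅ then 1 else 0 := by
  induction I using Finset.induction_on_min with
  | empty => rw [orderedProd_empty, Bialgebra.counit_one, if_pos rfl]
  | insert a I ha _ =>
    rw [orderedProd_insert x ha, Bialgebra.counit_mul, counit_eq_zero_of_mem_primitives (hx a),
      zero_mul, if_neg (insert_ne_empty a I)]

theorem comul_orderedProd {x : ι → B} (hx : ∀ i, x i ∈ primitives R B) (I : Finset ι) :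
    comul (R := R) (orderedProd x I) =
      ∑ J ∈ I.powerset, orderedProd x J ⊗ₜ orderedProd x (I \ J) := by
  induction I using Finset.induction_on_min with
  | empty => simp [orderedProd_empty, Algebra.TensorProduct.one_def]
  | insert a I ha ih =>
    have haI : a ∉ I := fun h => lt_irrefl _ (ha a h)
    rw [orderedProd_insert x ha, Bialgebra.comul_mul, mem_primitives.1 (hx a), ih, add_mul,
      mul_sum, mul_sum, sum_powerset_insert haI, add_comm]
    congr 1 <;> refine sum_congr rfl fun J hJ => ?_
    · rw [insert_sdiff_of_notMem _ fun h => haI (mem_powerset.1 hJ h),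
        orderedProd_insert x fun i hi => ha i (sdiff_subset hi),
        Algebra.TensorProduct.tmul_mul_tmul, one_mul]
    · rw [insert_sdiff_insert, sdiff_insert_of_notMem haI,
        orderedProd_insert x fun i hi => ha i (mem_powerset.1 hJ hi),
        Algebra.TensorProduct.tmul_mul_tmul, one_mul]

theorem convMul_apply_orderedProd {x : ι → B} (hx : ∀ i, x i ∈ primitives R B)
    (f g : WithConv (B →ₗ[R] B)) (I : Finset ι) :
    (f * g).ofConv (orderedProd x I) =
      ∑ J ∈ I.powerset, f.ofConv (orderedProd x J) * g.ofConv (orderedProd x (I \ J)) := by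
  simp only [LinearMap.convMul_apply, comul_orderedProd hx, map_sum, TensorProduct.map_tmul,
    LinearMap.mul'_apply]

theorem convOne_apply_orderedProd {x : ι → B} (hx : ∀ i, x i ∈ primitives R B) (I : Finset ι) :
    (1 : WithConv (B →ₗ[R] B)).ofConv (orderedProd x I) = if I = ∅ then 1 else 0 := by
  rw [LinearMap.convOne_apply, counit_orderedProd hx, apply_ite (algebraMap R B), map_one, map_zero]

end OrderedProducts

section FreeAlgebra

open scoped TensorProduct

attribute [local instance] LieRing.ofAssociativeRing

section CommRing

variable (R α : Type*) [CommRing R]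

/-- The bialgebra structure on the free associative algebra in which the generators are
primitive. -/
instance freeAlgebraBialgebra : Bialgebra R (FreeAlgebra R α) :=
  .ofAlgHom (FreeAlgebra.lift R fun a => FreeAlgebra.ι R a ⊗ₜ 1 + 1 ⊗ₜ FreeAlgebra.ι R a)
    FreeAlgebra.algebraMapInv
    (by
      ext a
      simp [Algebra.TensorProduct.one_def, TensorProduct.add_tmul, TensorProduct.tmul_add]
      abel)
    (by ext a; simp [FreeAlgebra.algebraMapInv])
    (by ext a; simp [FreeAlgebra.algebraMapInv])

/-- The free Lie algebra, as the Lie subalgebra of the free associative algebra generated by the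
generators. -/
def freeLie : LieSubalgebra R (FreeAlgebra R α) :=
  LieSubalgebra.lieSpan R _ (Set.range (FreeAlgebra.ι R))

variable {α}

theorem ι_mem_primitives (a : α) : FreeAlgebra.ι R a ∈ primitives R (FreeAlgebra R α) :=
  FreeAlgebra.lift_ι_apply _ a

variable {R}

theorem freeLie_le_primitives : freeLie R α ≤ primitives R (FreeAlgebra R α) :=
  LieSubalgebra.lieSpan_le.2 (Set.range_subset_iff.2 (ι_mem_primitives R))

end CommRing

theorem span_pow_freeLie_eq_top (K α : Type*) [Field K] [CharZero K] :
    Submodule.span K {a | ∃ z ∈ freeLie K α, ∃ j : ℕ, z ^ j = a} = ⊤ :=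
  span_pow_eq_top (top_unique (FreeAlgebra.adjoin_range_ι (R := K) (X := α) ▸
    Algebra.adjoin_mono LieSubalgebra.subset_lieSpan))

end FreeAlgebra

section Completion

open FreeAlgebra (ι)

attribute [local instance] LieRing.ofAssociativeRing

variable {K : Type} [Field K] {n : ℕ}

/-- The inclusion of the free associative algebra into its degree completion. -/
def toFhat : FreeAlgebra K (Fin n) →ₗ[K] Fhat K n where
  toFun a w := (FreeAlgebra.equivMonoidAlgebraFreeMonoid a).coeff (FreeMonoid.ofList w)
  map_add' a b := by ext; simp
  map_smul' c a := by ext; simp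

theorem toFhat_apply (a : FreeAlgebra K (Fin n)) (w : List (Fin n)) :
    toFhat a w = (FreeAlgebra.equivMonoidAlgebraFreeMonoid a).coeff (FreeMonoid.ofList w) :=
  rfl

theorem equivMonoidAlgebraFreeMonoid_prod_map_ι (w : List (Fin n)) :
    FreeAlgebra.equivMonoidAlgebraFreeMonoid (w.map (ι K)).prod =
      MonoidAlgebra.single (FreeMonoid.ofList w) 1 := by
  induction w with
  | nil => rw [List.map_nil, List.prod_nil, map_one]; rfl
  | cons i w ih =>
    rw [List.map_cons, List.prod_cons, map_mul, ih, FreeMonoid.ofList_cons]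
    simp [FreeAlgebra.equivMonoidAlgebraFreeMonoid]

theorem toFhat_prod_map_ι (w : List (Fin n)) : toFhat (w.map (ι K)).prod = delta w := by
  classical
  ext v
  rw [toFhat_apply, equivMonoidAlgebraFreeMonoid_prod_map_ι, MonoidAlgebra.coeff_single,
    Finsupp.single_apply, delta]
  simp only [EmbeddingLike.apply_eq_iff_eq, eq_comm]

theorem toFhat_ι (i : Fin n) : toFhat (ι K i) = delta [i] := by
  rw [← toFhat_prod_map_ι, List.map_singleton, List.prod_singleton]

theorem toFhat_one : toFhat (1 : FreeAlgebra K (Fin n)) = oneF := toFhat_prod_map_ι []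

theorem toFhat_mul (a b : FreeAlgebra K (Fin n)) : toFhat (a * b) = mulF (toFhat a) (toFhat b) := by
  classical
  ext v
  let splittings := (range (v.length + 1)).image
    fun i => (FreeMonoid.ofList (v.take i), FreeMonoid.ofList (v.drop i))
  have mem_splittings {s : FreeMonoid (Fin n) × FreeMonoid (Fin n)} :
      s ∈ splittings ↔ s.1 * s.2 = FreeMonoid.ofList v := by
    simp only [splittings, mem_image, mem_range]
    constructor
    · rintro ⟨i, -, rfl⟩
      rw [← FreeMonoid.ofList_append, List.take_append_drop]
    · intro h
      have hv : v = s.1.toList ++ s.2.toList := by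
        rw [← FreeMonoid.toList_mul, h, FreeMonoid.toList_ofList]
      exact ⟨s.1.toList.length, by simp [hv], by simp [hv]⟩
  rw [toFhat_apply, map_mul,
    MonoidAlgebra.coeff_mul_antidiag _ _ (FreeMonoid.ofList v) splittings mem_splittings,
    sum_image]
  · rfl
  · intro i hi j hj h
    have hlen := congrArg (fun s => s.1.toList.length) h
    simp only [FreeMonoid.toList_ofList, List.length_take, coe_range, Set.mem_Iio] at hlen hi hj
    omega

theorem toFhat_pow (a : FreeAlgebra K (Fin n)) (m : ℕ) : toFhat (a ^ m) = powF (toFhat a) m := by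
  induction m with
  | zero => exact toFhat_one
  | succ m ih => rw [pow_succ', toFhat_mul, ih, powF]

theorem isLieElem_toFhat {z : FreeAlgebra K (Fin n)} (hz : z ∈ freeLie K (Fin n)) :
    IsLieElem (toFhat z) := by
  induction hz using LieSubalgebra.lieSpan_induction with
  | mem x h => obtain ⟨i, rfl⟩ := h; rw [toFhat_ι]; exact .gen i
  | zero => rw [map_zero]; exact .zero
  | add x y _ _ hx hy => rw [map_add]; exact .add hx hy
  | smul c x _ hx => rw [map_smul]; exact .smul c hx
  | lie x y _ _ hx hy =>
    rw [LieRing.of_associative_ring_bracket, map_sub, toFhat_mul, toFhat_mul]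
    exact .lieBracket hx hy

theorem IsLieElem.apply_nil {f : Fhat K n} (hf : IsLieElem f) : f [] = 0 := by
  induction hf with
  | gen i => exact if_neg (List.cons_ne_nil i []).symm
  | zero => rfl
  | add _ _ hf hg => rw [Pi.add_apply, hf, hg, add_zero]
  | smul c _ hf => rw [Pi.smul_apply, hf, smul_zero]
  | lieBracket _ _ hf hg => simp [mulF, hf, hg]

theorem powF_apply_eq_zero {f : Fhat K n} (hf : f [] = 0) {m : ℕ} {v : List (Fin n)}
    (hv : v.length < m) : powF f m v = 0 := by
  induction m generalizing v with
  | zero => exact absurd hv v.length.not_lt_zero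
  | succ m ih =>
    rw [powF, mulF]
    refine sum_eq_zero fun i hi => ?_
    rw [mem_range] at hi
    rcases i.eq_zero_or_pos with rfl | hi0
    · rw [List.take_zero, hf, zero_mul]
    · rw [ih (by rw [List.length_drop]; omega), mul_zero]

theorem prodListF_replicate (f : Fhat K n) (m : ℕ) : prodListF (List.replicate m f) = powF f m := by
  induction m with
  | zero => rfl
  | succ m ih => rw [List.replicate_succ, prodListF, ih, powF]

variable [CharZero K]

theorem symProd_const (f : Fhat K n) (m : ℕ) : symProd (fun _ : Fin m => f) = powF f m := by
  have hm : (m.factorial : K) ≠ 0 := mod_cast m.factorial_ne_zero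
  simp only [symProd, Function.comp_def, List.ofFn_const, prodListF_replicate, sum_const,
    card_univ, Fintype.card_perm, Fintype.card_fin]
  rw [← Nat.cast_smul_eq_nsmul K, inv_smul_smul₀ hm]

theorem apply_toFhat_eq_eulerian (p : Fhat K n →ₗ[K] Fhat K n) (h0 : p oneF = 0)
    (h1 : ∀ z : Fhat K n, IsLieElem z → p z = z)
    (hk : ∀ m : ℕ, 2 ≤ m → ∀ z : Fin m → Fhat K n, (∀ i, IsLieElem (z i)) → p (symProd z) = 0)
    (a : FreeAlgebra K (Fin n)) (v : List (Fin n)) :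
    p (toFhat a) v = toFhat (eulerian K _ v.length a) v := by
  let coeff : Fhat K n →ₗ[K] K := LinearMap.proj v
  suffices h : coeff ∘ₗ p ∘ₗ toFhat = coeff ∘ₗ toFhat ∘ₗ eulerian K _ v.length from
    LinearMap.congr_fun h a
  refine LinearMap.ext_on (span_pow_freeLie_eq_top K (Fin n)) ?_
  rintro _ ⟨z, hz, m, rfl⟩
  have hLie := isLieElem_toFhat hz
  have p_pow : p (toFhat (z ^ m)) = if m = 1 then toFhat z else 0 := by
    match m with
    | 0 => rw [pow_zero, toFhat_one, h0, if_neg zero_ne_one]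
    | 1 => rw [pow_one, h1 _ hLie, if_pos rfl]
    | m + 2 =>
      rw [toFhat_pow, ← symProd_const, hk _ (Nat.le_add_left 2 m) _ fun _ => hLie,
        if_neg (by omega)]
  simp only [coeff, LinearMap.comp_apply, LinearMap.proj_apply, p_pow]
  rcases le_or_gt m v.length with hm | hm
  · rw [eulerian_pow_of_le (freeLie_le_primitives hz) hm, apply_ite toFhat, map_zero]
  · have pow_apply : toFhat (z ^ m) v = 0 := by
      rw [toFhat_pow, powF_apply_eq_zero hLie.apply_nil hm]
    rw [eulerian_pow (freeLie_le_primitives hz), map_smul, Pi.smul_apply, pow_apply, smul_zero]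
    split_ifs with h
    · rw [← pow_one z, ← h, pow_apply]
    · rfl

end Completion

section MultilinearSymbols

open WithConv
open FreeAlgebra (ι)

variable {K : Type} [Field K] {n : ℕ}

theorem sum_powerset_ite_mul_ite {α R : Type*} [DecidableEq α] [NonUnitalNonAssocSemiring R]
    (I : Finset α) (u w : List α) (a b : R) :
    ∑ J ∈ I.powerset, (if u.Nodup ∧ u.toFinset = J then a else 0) *
        (if w.Nodup ∧ w.toFinset = I \ J then b else 0) =
      if (u ++ w).Nodup ∧ (u ++ w).toFinset = I then a * b else 0 := by
  have term_eq (J : Finset α) : (if u.Nodup ∧ u.toFinset = J then a else 0) *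
        (if w.Nodup ∧ w.toFinset = I \ J then b else 0) =
      if u.toFinset = J then
        if u.Nodup ∧ w.Nodup ∧ w.toFinset = I \ u.toFinset then a * b else 0 else 0 := by
    rw [ite_zero_mul_ite_zero, ← ite_and]
    refine if_congr ?_ rfl rfl
    constructor
    · rintro ⟨⟨hu, rfl⟩, hw⟩
      exact ⟨rfl, hu, hw⟩
    · rintro ⟨rfl, hu, hw⟩
      exact ⟨⟨hu, rfl⟩, hw⟩
  have split_iff : u.toFinset ⊆ I ∧ u.Nodup ∧ w.Nodup ∧ w.toFinset = I \ u.toFinset ↔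
      (u ++ w).Nodup ∧ (u ++ w).toFinset = I := by
    rw [List.nodup_append', ← List.disjoint_toFinset_iff_disjoint, List.toFinset_append]
    constructor
    · rintro ⟨hI, hu, hw, h⟩
      rw [h, union_sdiff_of_subset hI]
      exact ⟨⟨hu, hw, disjoint_sdiff⟩, rfl⟩
    · rintro ⟨⟨hu, hw, h⟩, rfl⟩
      exact ⟨subset_union_left, hu, hw, (union_sdiff_cancel_left h).symm⟩
  simp only [term_eq, sum_ite_eq, mem_powerset]
  rw [← ite_and]
  exact if_congr split_iff rfl rfl

/-- `f` has multilinear symbol `X` if it sends the increasing word on each set `I` of letters to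
the part of `X` supported on the words in which each letter of `I`, and no other letter, occurs
exactly once. -/
def HasMultilinearSymbol (f : WithConv (FreeAlgebra K (Fin n) →ₗ[K] FreeAlgebra K (Fin n)))
    (X : Fhat K n) : Prop :=
  ∀ I v, toFhat (f.ofConv (orderedProd (ι K) I)) v = if v.Nodup ∧ v.toFinset = I then X v else 0

namespace HasMultilinearSymbol

variable {f g : WithConv (FreeAlgebra K (Fin n) →ₗ[K] FreeAlgebra K (Fin n))} {X Y : Fhat K n}

theorem one : HasMultilinearSymbol 1 (oneF : Fhat K n) := by
  intro I v
  rw [convOne_apply_orderedProd (ι_mem_primitives K), apply_ite toFhat, toFhat_one, map_zero]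
  by_cases hv : v = []
  · subst hv
    simp [eq_comm, ite_apply]
  · simp [oneF, hv, ite_apply]

theorem sub (hf : HasMultilinearSymbol f X) (hg : HasMultilinearSymbol g Y) :
    HasMultilinearSymbol (f - g) (X - Y) := by
  intro I v
  rw [ofConv_sub, LinearMap.sub_apply, map_sub, Pi.sub_apply, hf, hg, Pi.sub_apply]
  split_ifs
  · rfl
  · exact sub_zero 0

theorem mul (hf : HasMultilinearSymbol f X) (hg : HasMultilinearSymbol g Y) :
    HasMultilinearSymbol (f * g) (mulF X Y) := by
  intro I v
  rw [convMul_apply_orderedProd (ι_mem_primitives K), map_sum, Finset.sum_apply]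
  simp only [toFhat_mul, mulF]
  rw [sum_comm]
  simp only [hf _ _, hg _ _, sum_powerset_ite_mul_ite, List.take_append_drop]
  split_ifs
  · rfl
  · exact sum_const_zero

theorem pow (hf : HasMultilinearSymbol f X) (m : ℕ) : HasMultilinearSymbol (f ^ m) (powF X m) := by
  induction m with
  | zero => exact one
  | succ m ih => rw [pow_succ', powF]; exact hf.mul ih

end HasMultilinearSymbol

theorem mulF_cons (f g : Fhat K n) (i : Fin n) (w : List (Fin n)) :
    mulF f g (i :: w) = f [] * g (i :: w) + mulF (fun u => f (i :: u)) g w := by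
  rw [mulF, List.length_cons, sum_range_succ', add_comm]
  rfl

theorem powF_delta_singleton (i : Fin n) (m : ℕ) :
    powF (delta [i] : Fhat K n) m = delta (List.replicate m i) := by
  rw [← toFhat_ι, ← toFhat_pow, ← toFhat_prod_map_ι, List.map_replicate, List.prod_replicate]

theorem expF_delta_nil [CharZero K] (i : Fin n) : expF (delta [i] : Fhat K n) [] = 1 := by
  simp [expF, powF_delta_singleton, delta]

theorem expF_delta_cons_of_nodup [CharZero K] (i : Fin n) {j : Fin n} {u : List (Fin n)}
    (hu : (j :: u).Nodup) :
    expF (delta [i] : Fhat K n) (j :: u) = if j = i ∧ u = [] then 1 else 0 := by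
  have eq_replicate_iff (m : ℕ) : j :: u = List.replicate m i ↔ m = 1 ∧ j = i ∧ u = [] := by
    constructor
    · intro h
      have hm : m ≤ 1 := by rwa [h, List.nodup_replicate] at hu
      interval_cases m <;> simp_all
    · rintro ⟨rfl, rfl, rfl⟩
      rfl
  simp only [expF, powF_delta_singleton, delta, eq_replicate_iff, ite_and, mul_ite, mul_zero,
    sum_ite_eq']
  simp

theorem mulF_expF_delta_cons_of_nodup [CharZero K] (i j : Fin n) (g : Fhat K n)
    {u : List (Fin n)} (hu : (j :: u).Nodup) :
    mulF (fun w => expF (delta [i]) (j :: w)) g u = if j = i then g u else 0 := by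
  rw [mulF, sum_eq_single_of_mem 0 (mem_range.2 u.length.succ_pos)]
  · rw [List.take_zero, List.drop_zero, expF_delta_cons_of_nodup i (List.nodup_singleton j)]
    simp
  · intro m hm hm0
    have take_ne_nil : u.take m ≠ [] := by
      rw [mem_range] at hm
      rw [Ne, List.take_eq_nil_iff, not_or]
      exact ⟨hm0, by rintro rfl; exact hm0 (Nat.lt_one_iff.1 hm)⟩
    rw [expF_delta_cons_of_nodup i (hu.sublist ((u.take_sublist m).cons_cons j)),
      if_neg fun h => take_ne_nil h.2, zero_mul]

theorem prodListF_expF_of_nodup [CharZero K] {l v : List (Fin n)} (hl : l.Nodup) (hv : v.Nodup) :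
    prodListF (l.map fun i => expF (delta [i] : Fhat K n)) v = if v.Sublist l then 1 else 0 := by
  induction l generalizing v with
  | nil => simp [prodListF, oneF]
  | cons i l ih =>
    obtain ⟨hil, hl⟩ := List.nodup_cons.1 hl
    rw [List.map_cons, prodListF]
    cases v with
    | nil => simp [mulF, expF_delta_nil, ih hl]
    | cons j u =>
      rw [mulF_cons, expF_delta_nil, one_mul, ih hl hv, mulF_expF_delta_cons_of_nodup i j _ hv,
        ih hl hv.of_cons]
      rcases eq_or_ne j i with rfl | hji
      · rw [if_neg fun h => hil (h.subset List.mem_cons_self), if_pos rfl, zero_add]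
        exact if_congr List.cons_sublist_cons.symm rfl rfl
      · rw [if_neg hji, add_zero]
        exact if_congr (by simp [List.sublist_cons_iff, hji]) rfl rfl

theorem prodListF_ofFn_expF_of_nodup [CharZero K] {v : List (Fin n)} (hv : v.Nodup) :
    prodListF (List.ofFn fun i => expF (delta [i] : Fhat K n)) v =
      if v.Pairwise (· ≤ ·) then 1 else 0 := by
  rw [List.ofFn_eq_map, prodListF_expF_of_nodup (List.nodup_finRange n) hv]
  refine if_congr ⟨fun h => (List.pairwise_le_finRange n).sublist h, fun h => ?_⟩ rfl rfl
  exact List.sublist_of_subperm_of_pairwise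
    (List.subperm_of_subset hv fun i _ => List.mem_finRange i) h (List.pairwise_le_finRange n)

theorem hasMultilinearSymbol_id [CharZero K] :
    HasMultilinearSymbol (toConv LinearMap.id)
      (prodListF (List.ofFn fun i => expF (delta [i] : Fhat K n))) := by
  intro I v
  have sort_iff : v = I.sort ↔ (v.Nodup ∧ v.toFinset = I) ∧ v.Pairwise (· ≤ ·) := by
    constructor
    · rintro rfl
      exact ⟨⟨I.sort_nodup _, I.sort_toFinset _⟩, I.pairwise_sort _⟩
    · rintro ⟨⟨hv, rfl⟩, h⟩
      exact ((List.toFinset_sort _ hv).2 h).symm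
  rw [LinearMap.id_apply, orderedProd, toFhat_prod_map_ι, delta, if_congr sort_iff rfl rfl, ite_and]
  refine if_ctx_congr Iff.rfl (fun h => ?_) fun _ => rfl
  exact (prodListF_ofFn_expF_of_nodup h.1).symm

theorem toFhat_eulerian_orderedProd [CharZero K] (I : Finset (Fin n)) (v : List (Fin n)) :
    toFhat (eulerian K _ v.length (orderedProd (ι K) I)) v = if v.Nodup ∧ v.toFinset = I then
      logF (prodListF (List.ofFn fun i => expF (delta [i]))) v else 0 := by
  have symbol (j : ℕ) := (hasMultilinearSymbol_id (K := K) (n := n).sub .one).pow j I v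
  simp only [eulerian_apply, map_sum, map_smul, Finset.sum_apply, Pi.smul_apply, symbol,
    smul_eq_mul, logF]
  split_ifs
  · rfl
  · simp only [mul_zero, sum_const_zero]

end MultilinearSymbols

/-- **(Reutenauer, Lemma 3.10).**  In the free associative algebra
`F_k = U(f_k)` on generators `y₁, …, y_k` (here `yⱼ = delta [j-1]`, the
word `y₁ ⋯ y_k` being `delta [0, 1, …, k-1]`), let `p_k : F_k → f_k` be the
composition of the inverse of the symmetrization isomorphism `S(f_k) → F_k`
with the projection onto `S¹(f_k) = f_k`; as in the paper, `p_k` is exactly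
characterized by the hypotheses below (linearity; `p ∘ sym` vanishes on `S⁰`
and on `Sᵏ`, `k ≥ 2`, and is the identity on `S¹ = f_k`).  Then
`p_k(y₁ ⋯ y_k) = CBH_k(y₁, …, y_k)`, the multilinear part of
`log (e^{y₁} ⋯ e^{y_k})`. -/
theorem p_word_eq_CBH {K : Type} [Field K] [CharZero K] {k : ℕ}
    (p : Fhat K k →ₗ[K] Fhat K k)
    (h0 : p oneF = 0)
    (h1 : ∀ z : Fhat K k, IsLieElem z → p z = z)
    (hk : ∀ m : ℕ, 2 ≤ m → ∀ z : Fin m → Fhat K k,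
      (∀ i, IsLieElem (z i)) → p (symProd z) = 0) :
    p (delta (List.ofFn (fun i : Fin k => i))) = CBHuniv K k := by
  ext v
  have word_eq : (delta (List.ofFn fun i : Fin k => i) : Fhat K k) =
      toFhat (orderedProd (FreeAlgebra.ι K) univ) := by
    rw [orderedProd, toFhat_prod_map_ι, Fin.sort_univ, ← List.ofFn_id]
    rfl
  have multilinear_iff : v.Nodup ∧ v.toFinset = univ ↔ v.length = k ∧ v.Nodup := by
    rw [and_comm]
    refine and_congr_left fun hv => ?_
    rw [← card_eq_iff_eq_univ, List.toFinset_card_of_nodup hv, Fintype.card_fin]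
  rw [word_eq, apply_toFhat_eq_eulerian p h0 h1 hk, toFhat_eulerian_orderedProd, CBHuniv]
  exact if_congr multilinear_iff rfl rfl

end CBHPaper
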